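/- Let 𝔎 be the fraction field of the polynomial ring over ℚ in the 84 indeterminates P_{ij} (1 ≤ i ≤ 6, 1 ≤ j ≤ 14), and let I ⊆ 𝔎[a_1,a_2,a_3,a_4,b_1,b_2] be the ideal generated by the six entries of P·F, where P = (P_{ij}) and F is the column of the 14 polynomials listed in the context. Then HF_I(1) = 7 and HF_I(d) = 18 for every d ≥ 2; in particular dim_𝔎(𝔎[a_1,a_2,a_3,a_4,b_1,b_2]/I) = 18. -/

import Mathlib

/-!
The system `P·F = 0` is affine-linear in `a₁, …, a₄`, with a `6 × 5` coefficient matrix over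
`𝔎[b₁, b₂]`. Its maximal minors are six relations between `b₁` and `b₂` of degree 6; multiplied by
`1, b₁, b₂` they are independent modulo the span of 18 of the 36 monomials of degree at most 7, all
of degree less than 7. Hence the subalgebra `B` of the quotient generated by `b₁` and `b₂` has
dimension at most 18.

For a suitable specialization of the parameters modulo 29 the system has 18 simple rational zeros,
and the value matrix of 18 monomials `qᵢ` of degree at most 2 at these points is invertible. Once
the Jacobian is inverted, the universal system is étale, hence flat, over the ring of integral
parameters, so independence of the `qᵢ` at the zeros lifts to independence over `𝔎`. The same holds
for the elements `δ ^ 3 * qᵢ`, where `δ` is the determinant expressing the `aᵢ` through `b₁` and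
`b₂` by Cramer's rule.

Since `δ * aᵢ ∈ B`, the 18 elements `δ ^ 3 * qᵢ` form a basis of `B`. Thus `1 = δ ^ 3 * g` with `g`
of degree at most 2, so that `aᵢ = δ ^ 3 * (g * aᵢ)` belongs to `B`, and `B` is the whole quotient.
The `qᵢ` are therefore a basis of the quotient, and they include the 7 monomials of degree at
most 1.
-/

open MvPolynomial

set_option synthInstance.maxHeartbeats 1000000
set_option maxHeartbeats 1000000

/-- The field `𝔎 = ℚ(P₁₁,…,P₆,₁₄)`: the fraction field of the polynomial ring over `ℚ` in the
84 indeterminates `P_{ij}` (`i : Fin 6`, `j : Fin 14`). -/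
abbrev ParamField : Type := FractionRing (MvPolynomial (Fin 6 × Fin 14) ℚ)

/-- The 14 polynomials in `𝔎[a₁,a₂,a₃,a₄,b₁,b₂]` arising from plane conics in `ℂ³` through the
origin; the variables are `a₁ = X 0, a₂ = X 1, a₃ = X 2, a₄ = X 3, b₁ = X 4, b₂ = X 5`. -/
noncomputable def conicFK : Fin 14 → MvPolynomial (Fin 6) ParamField :=
  ![1, X 0, X 1, X 2, X 3,
    X 2 * X 4, X 2 * X 5, X 3 * X 4, X 3 * X 5,
    X 0 * X 4 - 2 * X 5, X 0 * X 5 - 2 * X 1 * X 4,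
    X 4 * (X 3 * X 4 - X 2 * X 5), X 5 * (X 3 * X 4 - X 2 * X 5),
    X 1 * X 4 ^ 2 - X 0 * X 4 * X 5 + X 5 ^ 2]

/-- The ideal `I ⊆ 𝔎[a₁,…,b₂]` generated by the six entries of `P·F`, where `P = (P_{ij})` is
the generic `6×14` matrix of indeterminates. -/
noncomputable def conicIdeal : Ideal (MvPolynomial (Fin 6) ParamField) :=
  Ideal.span (Set.range fun i : Fin 6 =>
    ∑ j : Fin 14,
      C (algebraMap (MvPolynomial (Fin 6 × Fin 14) ℚ) ParamField (X (i, j))) * conicFK j)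

section Flatness

variable {R κ : Type*} [CommRing R]

theorem isFractionRing_of_isLocalization_of_isFractionRing (M : Submonoid R)
    (S K : Type*) [CommRing S] [IsDomain S] [Field K] [Algebra R S] [Algebra S K] [Algebra R K]
    [IsScalarTower R S K] [FaithfulSMul R S] [IsLocalization M S] [IsFractionRing S K] :
    IsFractionRing R K := by
  have hinj := FaithfulSMul.algebraMap_injective R S
  have := IsLocalization.localization_localization_isLocalization_of_has_all_units M
    (nonZeroDivisors S) K fun x hx => hx.mem_nonZeroDivisors
  rwa [le_antisymm (comap_nonZeroDivisors_le_of_injective hinj)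
    (nonZeroDivisors_le_comap_nonZeroDivisors_of_injective _ hinj)] at this

theorem linearIndependent_of_flat [IsDomain R] [Field κ] [Algebra R κ] {M τ : Type*}
    [AddCommGroup M] [Module R M] [Module.Flat R M] [Fintype τ] [DecidableEq τ]
    (hsurj : Function.Surjective (algebraMap R κ)) (x : τ → M)
    (ψ : τ → M →ₗ[R] κ) (hdet : (Matrix.of fun k i => ψ k (x i)).det ≠ 0) :
    LinearIndependent R x := by
  rw [Fintype.linearIndependent_iff]
  intro c hc
  obtain ⟨n, a, z, hx, ha⟩ := Module.Flat.isTrivialRelation_of_sum_smul_eq_zero hc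
  choose lift hlift using hsurj
  let N : Matrix τ τ R := Matrix.of (fun k j => lift (ψ k (z j))) * (Matrix.of a).transpose
  have hN : N.map (algebraMap R κ) = Matrix.of fun k i => ψ k (x i) := by
    ext k i
    simp [N, Matrix.mul_apply, hlift, hx, Algebra.smul_def, mul_comm]
  have hNdet : N.det ≠ 0 := by
    intro h
    rw [← hN, ← RingHom.mapMatrix_apply, ← RingHom.map_det, h, map_zero] at hdet
    exact hdet rfl
  have hac : (Matrix.of a).transpose.mulVec c = 0 := by
    ext j
    simpa [Matrix.mulVec, dotProduct, mul_comm] using ha j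
  have hNc : N.mulVec c = 0 := by rw [← Matrix.mulVec_mulVec, hac, Matrix.mulVec_zero]
  exact congrFun (Matrix.eq_zero_of_mulVec_eq_zero hNdet hNc)

theorem flat_of_isLocalizationAway_jacobian {S ι σ : Type*} [CommRing S]
    [Algebra R S] [Finite ι] [Finite σ] (P : Algebra.PreSubmersivePresentation R S ι σ) (T : Type*)
    [CommRing T] [Algebra S T] [Algebra R T] [IsScalarTower R S T]
    [IsLocalization.Away P.jacobian T] : Module.Flat R T := by
  let Q := Algebra.SubmersivePresentation.localizationAway T P.jacobian
  let submersive : Algebra.SubmersivePresentation R T (Unit ⊕ ι) (Unit ⊕ σ) :=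
    { Q.toPreSubmersivePresentation.comp P with
      jacobian_isUnit := by
        rw [Algebra.PreSubmersivePresentation.comp_jacobian_eq_jacobian_smul_jacobian,
          Algebra.smul_def]
        exact (IsLocalization.Away.algebraMap_isUnit P.jacobian).mul Q.jacobian_isUnit }
  have := submersive.isStandardSmooth
  infer_instance

/-- The Jacobian matrix of a square system of polynomials; the row index is the variable and the
column index the equation, as in `Algebra.PreSubmersivePresentation.jacobiMatrix`. -/
noncomputable def jacobianMatrix {ι : Type*} (f : ι → MvPolynomial ι R) :
    Matrix ι ι (MvPolynomial ι R) :=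
  Matrix.of fun i j => pderiv i (f j)

theorem jacobian_naive {ι : Type*} [Fintype ι] [DecidableEq ι] (f : ι → MvPolynomial ι R) :
    (Algebra.PreSubmersivePresentation.naive (v := f) id Function.injective_id).jacobian =
      Ideal.Quotient.mk (Ideal.span (Set.range f)) (jacobianMatrix f).det := by
  rw [Algebra.PreSubmersivePresentation.jacobian_eq_jacobiMatrix_det]
  congr 2
  ext1 i j
  exact Algebra.PreSubmersivePresentation.jacobiMatrix_apply _ i j

theorem linearIndependent_quotient_of_zeros [IsDomain R] [Field κ] {ι τ : Type*}
    [Fintype ι] [DecidableEq ι] [Fintype τ] [DecidableEq τ]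
    {φ : R →+* κ} (hφ : Function.Surjective φ)
    (f : ι → MvPolynomial ι R) (y : τ → ι → κ) (g : τ → MvPolynomial ι R)
    (hzero : ∀ k i, eval₂Hom φ (y k) (f i) = 0)
    (hjac : ∀ k, eval₂Hom φ (y k) (jacobianMatrix f).det ≠ 0)
    (hdet : (Matrix.of fun k i => eval₂Hom φ (y k) (g i)).det ≠ 0) :
    LinearIndependent R fun i => Ideal.Quotient.mk (Ideal.span (Set.range f)) (g i) := by
  algebraize [φ]
  let I := Ideal.span (Set.range f)
  let P := Algebra.PreSubmersivePresentation.naive (v := f) id Function.injective_id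
  let T := Localization.Away P.jacobian
  have hI (k : τ) : ∀ a ∈ I, aeval (y k) a = 0 := by
    have hle : I ≤ RingHom.ker (aeval (R := R) (y k)) := by
      rw [Ideal.span_le, Set.range_subset_iff]
      exact hzero k
    exact hle
  let ev (k : τ) : MvPolynomial ι R ⧸ I →ₐ[R] κ := Ideal.Quotient.liftₐ I (aeval (y k)) (hI k)
  have hunit (k : τ) : IsUnit (ev k P.jacobian) := by
    rw [jacobian_naive]
    exact (hjac k).isUnit
  let evT (k : τ) : T →ₐ[R] κ := IsLocalization.Away.liftAlgHom P.jacobian (f := ev k) (hunit k)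
  have hevT (k : τ) (a : MvPolynomial ι R) :
      evT k (algebraMap _ T (Ideal.Quotient.mk I a)) = eval₂Hom φ (y k) a :=
    IsLocalization.Away.lift_eq P.jacobian (hunit k) _
  have : Module.Flat R T := flat_of_isLocalizationAway_jacobian P T
  refine .of_comp (IsScalarTower.toAlgHom R (MvPolynomial ι R ⧸ I) T).toLinearMap ?_
  refine linearIndependent_of_flat hφ _ (fun k => (evT k).toLinearMap) ?_
  have hval :
      (Matrix.of fun k i => (evT k).toLinearMap (algebraMap _ T (Ideal.Quotient.mk I (g i)))) =
        Matrix.of fun k i => eval₂Hom φ (y k) (g i) := by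
    ext k i
    exact hevT k (g i)
  exact (congrArg Matrix.det hval).trans_ne hdet

theorem linearIndependent_quotient_map [IsDomain R] (K : Type*) [Field K] [Algebra R K]
    [IsFractionRing R K] {σ τ : Type*} [Finite τ] (I : Ideal (MvPolynomial σ R))
    (g : τ → MvPolynomial σ R) (hg : LinearIndependent R fun i => Ideal.Quotient.mk I (g i)) :
    LinearIndependent K fun i =>
      Ideal.Quotient.mk (I.map (MvPolynomial.map (algebraMap R K)))
        (MvPolynomial.map (algebraMap R K) (g i)) := by
  cases nonempty_fintype τ
  let _ : Algebra (MvPolynomial σ R) (MvPolynomial σ K) := algebraMvPolynomial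
  rw [← LinearIndependent.iff_fractionRing R K, Fintype.linearIndependent_iff]
  intro c hc i
  have hmem : algebraMap (MvPolynomial σ R) (MvPolynomial σ K) (∑ i, c i • g i) ∈
      I.map (algebraMap _ _) := by
    rw [algebraMap_def, ← Ideal.Quotient.eq_zero_iff_mem, ← hc, map_sum, map_sum]
    refine Finset.sum_congr rfl fun i _ => ?_
    rw [smul_eq_C_mul, map_mul, map_C, ← smul_eq_C_mul, algebraMap_smul]
    rfl
  rw [IsLocalization.algebraMap_mem_map_algebraMap_iff
    ((nonZeroDivisors R).map (C (σ := σ)))] at hmem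
  obtain ⟨_, ⟨d, hd, rfl⟩, hdm⟩ := hmem
  have hdc := Fintype.linearIndependent_iff.1 hg (fun i => d * c i) (by
    rw [← Ideal.Quotient.eq_zero_iff_mem, ← smul_eq_C_mul, Finset.smul_sum, map_sum] at hdm
    simp only [smul_smul] at hdm
    exact hdm) i
  exact (mul_eq_zero.1 hdc).resolve_left (nonZeroDivisors.ne_zero hd)

end Flatness

theorem ncard_setOf_degree_le (σ : Type*) [Fintype σ] (d : ℕ) :
    {m : σ →₀ ℕ | m.degree ≤ d}.ncard = (Fintype.card σ + d).choose d := by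
  classical
  suffices h : {m : σ →₀ ℕ | m.degree ≤ d}.ncard = (Fintype.card σ + 1).multichoose d by
    rw [h, Nat.multichoose_eq, Nat.add_right_comm, Nat.add_sub_cancel]
  induction d with
  | zero =>
    have hzero : {m : σ →₀ ℕ | m.degree ≤ 0} = {0} := by
      ext m
      exact Nat.le_zero.trans (Finsupp.degree_eq_zero_iff m)
    rw [hzero, Set.ncard_singleton, Nat.multichoose_zero_right]
  | succ d ih =>
    have hsplit : {m : σ →₀ ℕ | m.degree ≤ d + 1} =
        {m | m.degree = d + 1} ∪ {m | m.degree ≤ d} := by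
      ext m
      exact Nat.le_succ_iff.trans or_comm
    have hdisj : Disjoint {m : σ →₀ ℕ | m.degree = d + 1} {m | m.degree ≤ d} :=
      Set.disjoint_left.2 fun m (h : m.degree = d + 1) h' =>
        (Nat.lt_succ_self d).not_ge (h.ge.trans h')
    have heq : {m : σ →₀ ℕ | m.degree = d + 1} =
        (Finset.univ.finsuppAntidiag (d + 1) : Finset (σ →₀ ℕ)) := by
      ext m
      simp [Finsupp.degree_eq_sum]
    rw [hsplit, Set.ncard_union_eq hdisj (Finsupp.finite_of_degree_eq _)
      (Finsupp.finite_of_degree_le _), ih, heq, Set.ncard_coe_finset,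
      Finset.card_finsuppAntidiag_nat_eq_multichoose, Finset.card_univ,
      Nat.multichoose_succ_succ]

theorem finrank_restrictTotalDegree (σ K : Type*) [Fintype σ] [Field K] (d : ℕ) :
    Module.finrank K (restrictTotalDegree σ K d) = (Fintype.card σ + d).choose d :=
  (Module.finrank_eq_nat_card_basis (basisRestrictSupport K _)).trans (ncard_setOf_degree_le σ d)

theorem injective_of_det_ne_zero {R ε τ : Type*} [CommRing R] [Fintype τ] [DecidableEq τ]
    {F : τ → ε → R} {e : τ → ε} (h : (Matrix.of fun r p => F r (e p)).det ≠ 0) :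
    Function.Injective e := by
  intro p q hpq
  by_contra hne
  exact h (Matrix.det_zero_of_column_eq hne fun r => congrArg (F r) hpq)

section Pivots

variable {K A τ : Type*} [Field K] [CommRing A] [Algebra K A] {n D : ℕ}
  {β : Fin n → A} {rel : τ → MvPolynomial (Fin n) K} {pivot : τ → Fin n →₀ ℕ}

theorem aeval_monomial_mem_map_of_pivots [Fintype τ] [DecidableEq τ]
    (hrel : ∀ r, aeval β (rel r) = 0) (hdeg : ∀ r, (rel r).totalDegree ≤ D)
    (hdet : (Matrix.of fun r p => coeff (pivot p) (rel r)).det ≠ 0)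
    {m : Fin n →₀ ℕ} (hm : m.degree ≤ D) :
    aeval β (monomial m (1 : K)) ∈
      (restrictSupport K ({m | m.degree ≤ D} \ Set.range pivot)).map (aeval β).toLinearMap := by
  by_cases hpiv : m ∈ Set.range pivot
  swap
  · exact Submodule.mem_map_of_mem ((monomial_mem_restrictSupport K).2 (.inl ⟨hm, hpiv⟩))
  obtain ⟨p, rfl⟩ := hpiv
  set M := Matrix.of fun r p => coeff (pivot p) (rel r)
  let g := ∑ r, M⁻¹ p r • rel r
  have hg : aeval β g = 0 := by simp [g, hrel]
  have hcoeff (q : τ) : coeff (pivot q) g = (1 : Matrix τ τ K) p q := by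
    rw [← Matrix.nonsing_inv_mul M hdet.isUnit]
    simp [g, M, coeff_sum, Matrix.mul_apply]
  have hmem : monomial (pivot p) 1 - g ∈ restrictTotalDegree (Fin n) K D :=
    sub_mem ((monomial_mem_restrictSupport K).2 (.inl hm))
      (sum_mem fun r _ => Submodule.smul_mem _ _ ((mem_restrictTotalDegree _ _ _).2 (hdeg r)))
  have hinj := injective_of_det_ne_zero hdet
  refine ⟨monomial (pivot p) 1 - g, fun e he => ⟨hmem he, ?_⟩, by simp [hg]⟩
  rintro ⟨q, rfl⟩
  refine mem_support_iff.1 he ?_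
  change coeff (pivot q) (monomial (pivot p) 1 - g) = 0
  simp only [coeff_sub, coeff_monomial, hcoeff, Matrix.one_apply, hinj.eq_iff, sub_self]

theorem toSubmodule_range_aeval_eq_of_pivots [Fintype τ] [DecidableEq τ]
    (hrel : ∀ r, aeval β (rel r) = 0) (hdeg : ∀ r, (rel r).totalDegree ≤ D)
    (hdet : (Matrix.of fun r p => coeff (pivot p) (rel r)).det ≠ 0)
    (htop : ∀ m : Fin n →₀ ℕ, m.degree = D → m ∈ Set.range pivot) :
    Subalgebra.toSubmodule (aeval (R := K) β).range =
      (restrictSupport K ({m | m.degree ≤ D} \ Set.range pivot)).map (aeval β).toLinearMap := by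
  set V := (restrictSupport K ({m | m.degree ≤ D} \ Set.range pivot)).map (aeval β).toLinearMap
  have hmem {m : Fin n →₀ ℕ} (hm : m.degree ≤ D) : aeval β (monomial m (1 : K)) ∈ V :=
    aeval_monomial_mem_map_of_pivots hrel hdeg hdet hm
  have hstable (i : Fin n) : V ≤ V.comap (LinearMap.mulRight K (β i)) := by
    rw [Submodule.map_le_iff_le_comap, restrictSupport_eq_span, Submodule.span_le]
    rintro _ ⟨m, ⟨hm, hpiv⟩, rfl⟩
    have hlt : m.degree < D := lt_of_le_of_ne hm fun h => hpiv (htop m h)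
    have hsucc : (m + Finsupp.single i 1).degree ≤ D := by
      rwa [map_add, Finsupp.degree_single]
    simpa [monomial_add_single] using hmem hsucc
  apply le_antisymm
  · rintro _ ⟨f, rfl⟩
    induction f using MvPolynomial.induction_on with
    | C c =>
      have hone : aeval β (monomial 0 (1 : K)) ∈ V := hmem (by simp)
      simpa [Algebra.algebraMap_eq_smul_one] using V.smul_mem c hone
    | add f g hf hg => simpa using V.add_mem hf hg
    | mul_X f i hf => simpa using hstable i hf
  · rintro _ ⟨f, -, rfl⟩
    exact ⟨f, rfl⟩

theorem finite_range_aeval_of_pivots [Fintype τ] [DecidableEq τ]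
    (hrel : ∀ r, aeval β (rel r) = 0) (hdeg : ∀ r, (rel r).totalDegree ≤ D)
    (hdet : (Matrix.of fun r p => coeff (pivot p) (rel r)).det ≠ 0)
    (hpivot : ∀ p, (pivot p).degree ≤ D)
    (htop : ∀ m : Fin n →₀ ℕ, m.degree = D → m ∈ Set.range pivot) :
    Module.Finite K (aeval (R := K) β).range ∧
      Module.finrank K (aeval (R := K) β).range ≤ (n + D).choose D - Fintype.card τ := by
  let T := {m : Fin n →₀ ℕ | m.degree ≤ D} \ Set.range pivot
  have hT : T.Finite := (Finsupp.finite_of_degree_le D).sdiff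
  have := hT.to_subtype
  have hfin : Module.Finite K (restrictSupport K T) := .of_basis (basisRestrictSupport K T)
  have hcard : T.ncard = (n + D).choose D - Fintype.card τ := by
    rw [Set.ncard_sdiff (Set.range_subset_iff.2 hpivot), ncard_setOf_degree_le, Fintype.card_fin,
      Set.ncard_range_of_injective (injective_of_det_ne_zero hdet), Nat.card_eq_fintype_card]
  have heq := toSubmodule_range_aeval_eq_of_pivots hrel hdeg hdet htop
  have hfin' : Module.Finite K (Subalgebra.toSubmodule (aeval (R := K) β).range) := by
    rw [heq]
    infer_instance
  refine ⟨hfin', ?_⟩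
  calc Module.finrank K (aeval (R := K) β).range
      = Module.finrank K ((restrictSupport K T).map (aeval β).toLinearMap) := by rw [← heq]; rfl
    _ ≤ Module.finrank K (restrictSupport K T) := Submodule.finrank_map_le _ _
    _ = T.ncard := Module.finrank_eq_nat_card_basis (basisRestrictSupport K T)
    _ = _ := hcard

end Pivots

section Generation

theorem pow_mul_aeval_mem {K A σ : Type*} [CommRing K] [CommRing A] [Algebra K A] {x : σ → A}
    {B : Subalgebra K A} {δ : A} (hδ : δ ∈ B) (hx : ∀ i, δ * x i ∈ B) {f : MvPolynomial σ K}
    {n : ℕ} (hf : f.totalDegree ≤ n) : δ ^ n * aeval x f ∈ B := by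
  have hmonomial {m : σ →₀ ℕ} (hm : m.degree ≤ n) : δ ^ n * m.prod (fun i k => x i ^ k) ∈ B := by
    rw [← Nat.sub_add_cancel hm, pow_add, mul_assoc, Finsupp.degree_apply,
      ← Finset.prod_pow_eq_pow_sum, Finsupp.prod, ← Finset.prod_mul_distrib]
    refine mul_mem (pow_mem hδ _) (prod_mem fun i _ => ?_)
    rw [← mul_pow]
    exact pow_mem (hx i) _
  rw [aeval_def, eval₂_eq, Finset.mul_sum]
  refine sum_mem fun m hm => ?_
  rw [mul_left_comm]
  exact mul_mem (B.algebraMap_mem _) (hmonomial ((le_totalDegree hm).trans hf))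

theorem subalgebra_eq_top_of_linearIndependent {K A σ τ : Type*} [Field K] [CommRing A]
    [Algebra K A] [Fintype τ] {x : σ → A} (hx : (aeval (R := K) x).range = ⊤)
    {B : Subalgebra K A} [Module.Finite K B] (hB : Module.finrank K B ≤ Fintype.card τ)
    {δ : A} (hδ : δ ∈ B) (hδx : ∀ i, δ * x i ∈ B) {d : ℕ} {q : τ → MvPolynomial σ K}
    (hq : ∀ i, (q i).totalDegree ≤ d)
    (hind : LinearIndependent K fun i => δ ^ (d + 1) * aeval x (q i)) : B = ⊤ := by
  -- The spare power of `δ` in the spanning family turns `1 = δ ^ (d + 1) * g` into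
  -- `x i = δ ^ (d + 1) * (g * x i)`, which lies in `B`.
  let u : τ → B := fun i =>
    ⟨δ ^ (d + 1) * aeval x (q i), pow_mul_aeval_mem hδ hδx ((hq i).trans d.le_succ)⟩
  have hu : LinearIndependent K u := .of_comp B.val.toLinearMap hind
  have hspan : Submodule.span K (Set.range u) = ⊤ :=
    hu.span_eq_top_of_card_eq_finrank' (hu.fintype_card_le_finrank.antisymm hB)
  obtain ⟨c, hc⟩ := (Submodule.mem_span_range_iff_exists_fun K).1
    (hspan.symm ▸ Submodule.mem_top : (1 : B) ∈ Submodule.span K (Set.range u))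
  let g := ∑ i, c i • q i
  have hg : δ ^ (d + 1) * aeval x g = 1 := by
    simpa [u, g, Finset.mul_sum] using congrArg B.val hc
  have hgdeg : g.totalDegree ≤ d :=
    totalDegree_finsetSum_le fun i _ => (totalDegree_smul_le _ _).trans (hq i)
  have hxB (i : σ) : x i ∈ B := by
    have hdeg : (g * X i).totalDegree ≤ d + 1 :=
      (totalDegree_mul _ _).trans
        (add_le_add hgdeg ((totalDegree_monomial_le _ _).trans (Finsupp.sum_single_index rfl).le))
    have hmem := pow_mul_aeval_mem hδ hδx hdeg
    rwa [map_mul, aeval_X, ← mul_assoc, hg, one_mul] at hmem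
  rw [eq_top_iff, ← hx, ← Algebra.adjoin_range_eq_range_aeval, Algebra.adjoin_le_iff]
  exact Set.range_subset_iff.2 hxB

end Generation

section HilbertFunction

variable {K σ : Type*} [Field K] (I : Ideal (MvPolynomial σ K)) (d : ℕ)

instance finite_restrictTotalDegree [Finite σ] :
    Module.Finite K (restrictTotalDegree σ K d) :=
  have := (Finsupp.finite_of_degree_le (σ := σ) d).to_subtype
  .of_basis (basisRestrictSupport K {m : σ →₀ ℕ | m.degree ≤ d})

theorem choose_sub_finrank_inf_restrictTotalDegree [Fintype σ] :
    (Fintype.card σ + d).choose d -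
        Module.finrank K ↥(I.restrictScalars K ⊓ restrictTotalDegree σ K d) =
      Module.finrank K ((restrictTotalDegree σ K d).map (Ideal.Quotient.mkₐ K I).toLinearMap) := by
  let W := restrictTotalDegree σ K d
  let f := (Ideal.Quotient.mkₐ K I).toLinearMap.domRestrict W
  have hker : (LinearMap.ker f).map W.subtype = I.restrictScalars K ⊓ W := by
    have hkerI : LinearMap.ker (Ideal.Quotient.mkₐ K I).toLinearMap = I.restrictScalars K := by
      ext g
      exact Ideal.Quotient.eq_zero_iff_mem
    rw [LinearMap.ker_domRestrict, hkerI, Submodule.map_comap_subtype, inf_comm]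
  have hfinrank :
      Module.finrank K ↥(I.restrictScalars K ⊓ W) = Module.finrank K (LinearMap.ker f) := by
    rw [← hker, Submodule.finrank_map_subtype_eq]
  rw [← finrank_restrictTotalDegree σ K d, hfinrank, ← f.finrank_range_add_finrank_ker,
    Nat.add_sub_cancel, LinearMap.range_domRestrict]

variable {I d} in
theorem card_le_finrank_map_restrictTotalDegree [Finite σ] {τ : Type*} [Fintype τ]
    {q : τ → MvPolynomial σ K} (hq : ∀ i, (q i).totalDegree ≤ d)
    (hind : LinearIndependent K fun i => Ideal.Quotient.mk I (q i)) :
    Fintype.card τ ≤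
      Module.finrank K ((restrictTotalDegree σ K d).map (Ideal.Quotient.mkₐ K I).toLinearMap) := by
  let u : τ → (restrictTotalDegree σ K d).map (Ideal.Quotient.mkₐ K I).toLinearMap := fun i =>
    ⟨Ideal.Quotient.mk I (q i),
      Submodule.mem_map_of_mem ((mem_restrictTotalDegree _ _ _).2 (hq i))⟩
  have hu : LinearIndependent K u := .of_comp (Submodule.subtype _) hind
  exact hu.fintype_card_le_finrank

end HilbertFunction

theorem totalDegree_det_le {R σ m : Type*} [CommRing R] [Fintype m] [DecidableEq m] {d : ℕ}
    {M : Matrix m m (MvPolynomial σ R)} (h : ∀ i j, (M i j).totalDegree ≤ d) :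
    M.det.totalDegree ≤ Fintype.card m * d := by
  rw [Matrix.det_apply]
  refine totalDegree_finsetSum_le fun e _ => ?_
  calc (Equiv.Perm.sign e • ∏ i, M (e i) i).totalDegree
      ≤ (∏ i, M (e i) i).totalDegree := totalDegree_smul_le _ _
    _ ≤ ∑ i, (M (e i) i).totalDegree := totalDegree_finsetProd _ _
    _ ≤ Fintype.card m * d := Finset.sum_le_card_nsmul _ _ d fun i _ => h _ _

theorem adjugate_mulVec_mulVec {R m : Type*} [CommRing R] [Fintype m] [DecidableEq m]
    (M : Matrix m m R) (v : m → R) : M.adjugate.mulVec (M.mulVec v) = M.det • v := by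
  rw [Matrix.mulVec_mulVec, Matrix.adjugate_mul, Matrix.smul_mulVec, Matrix.one_mulVec]

theorem det_mul_mem_of_mulVec_mem {K A m : Type*} [CommRing K] [CommRing A] [Algebra K A]
    [Fintype m] [DecidableEq m] {B : Subalgebra K A} {N : Matrix m m B} {x : m → A}
    (h : ∀ i, (N.map B.val).mulVec x i ∈ B) (i : m) : (N.det : A) * x i ∈ B := by
  have hdet : (N.det : A) = (N.map B.val).det := AlgHom.map_det B.val N
  have hadj (j : m) : (N.map B.val).adjugate i j = N.adjugate i j :=
    (congrFun₂ (AlgHom.map_adjugate B.val N) i j).symm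
  rw [hdet, ← smul_eq_mul, ← Pi.smul_apply, ← adjugate_mulVec_mulVec]
  refine sum_mem fun j _ => mul_mem ?_ (h j)
  change (N.map B.val).adjugate i j ∈ B
  rw [hadj]
  exact (N.adjugate i j).2

section Conic

variable {S T : Type*} [CommRing S] [CommRing T]

/-- The 14 coordinate polynomials `F` evaluated at `x = (a₁, a₂, a₃, a₄, b₁, b₂)`. -/
def conicForm (x : Fin 6 → S) : Fin 14 → S :=
  ![1, x 0, x 1, x 2, x 3,
    x 2 * x 4, x 2 * x 5, x 3 * x 4, x 3 * x 5,
    x 0 * x 4 - 2 * x 5, x 0 * x 5 - 2 * x 1 * x 4,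
    x 4 * (x 3 * x 4 - x 2 * x 5), x 5 * (x 3 * x 4 - x 2 * x 5),
    x 1 * x 4 ^ 2 - x 0 * x 4 * x 5 + x 5 ^ 2]

/-- The coefficients of `F` as a vector of affine-linear forms in `(a₁, a₂, a₃, a₄)`, the constant
coefficient first; here `s = b₁` and `t = b₂`. -/
def conicCoeff (s t : S) : Matrix (Fin 14) (Fin 5) S :=
  !![1, 0, 0, 0, 0;
    0, 1, 0, 0, 0;
    0, 0, 1, 0, 0;
    0, 0, 0, 1, 0;
    0, 0, 0, 0, 1;
    0, 0, 0, s, 0;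
    0, 0, 0, t, 0;
    0, 0, 0, 0, s;
    0, 0, 0, 0, t;
    -2 * t, s, 0, 0, 0;
    0, t, -2 * s, 0, 0;
    0, 0, 0, -(s * t), s ^ 2;
    0, 0, 0, -t ^ 2, s * t;
    t ^ 2, -(s * t), s ^ 2, 0, 0]

theorem conicCoeff_mulVec (x : Fin 6 → S) :
    (conicCoeff (x 4) (x 5)).mulVec ![1, x 0, x 1, x 2, x 3] = conicForm x := by
  ext j
  fin_cases j <;> simp [conicCoeff, conicForm, Matrix.mulVec, dotProduct, Fin.sum_univ_five] <;>
    ring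

theorem map_conicCoeff (f : S →+* T) (s t : S) :
    (conicCoeff s t).map f = conicCoeff (f s) (f t) := by
  simp [conicCoeff, ← Matrix.ext_iff, Fin.forall_fin_succ, map_ofNat]

/-- Column operations lowering the degree: the `5 × 5` minors of `conicCoeff s t` a priori have
degree 10 in `(s, t)`, but multiplying by this matrix, of determinant `s ^ 4`, makes all entries
quadratic, which leaves degree at most `10 - 4 = 6`. -/
def degreeClearing (s t : S) : Matrix (Fin 5) (Fin 5) S :=
  !![s ^ 2, 0, 0, 0, 0;
    2 * (s * t), s, 0, 0, 0;
    t ^ 2, t, 1, 0, 0;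
    0, 0, 0, s, 0;
    0, 0, 0, t, 1]

theorem det_degreeClearing (s t : S) : (degreeClearing s t).det = s ^ 4 := by
  rw [Matrix.det_of_isLowerTriangular]
  · simp only [degreeClearing, Fin.prod_univ_five, Matrix.of_apply, Matrix.cons_val]
    ring
  · intro i j hij
    have hlt : i < j := hij
    clear hij
    fin_cases i <;> fin_cases j <;> simp [degreeClearing] at hlt ⊢

/-- The product of `conicCoeff` and `degreeClearing`, whose entries are at most quadratic. -/
def clearedConicCoeff (s t : S) : Matrix (Fin 14) (Fin 5) S :=
  !![s ^ 2, 0, 0, 0, 0;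
    2 * (s * t), s, 0, 0, 0;
    t ^ 2, t, 1, 0, 0;
    0, 0, 0, s, 0;
    0, 0, 0, t, 1;
    0, 0, 0, s ^ 2, 0;
    0, 0, 0, s * t, 0;
    0, 0, 0, s * t, s;
    0, 0, 0, t ^ 2, t;
    0, s ^ 2, 0, 0, 0;
    0, -(s * t), -(2 * s), 0, 0;
    0, 0, 0, 0, s ^ 2;
    0, 0, 0, 0, s * t;
    0, 0, s ^ 2, 0, 0]

theorem conicCoeff_mul_degreeClearing (s t : S) :
    conicCoeff s t * degreeClearing s t = clearedConicCoeff s t := by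
  simp only [conicCoeff, clearedConicCoeff, neg_mul, degreeClearing, Matrix.cons_mul,
    Nat.succ_eq_add_one, Nat.reduceAdd, Matrix.vecMul_cons, Matrix.head_cons, one_smul,
    Matrix.tail_cons, zero_smul,
    Matrix.empty_vecMul, add_zero, zero_add, Matrix.smul_cons, smul_eq_mul, mul_zero,
    Matrix.smul_empty, mul_one, neg_smul, Matrix.neg_cons, neg_zero, Matrix.neg_empty,
    Matrix.add_cons, Matrix.empty_add_empty, Matrix.empty_mul, Equiv.symm_apply_apply,
    EmbeddingLike.apply_eq_iff_eq, Matrix.vecCons_inj, and_true, true_and]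
  split_ands <;> ring

theorem clearedConicCoeff_mem_restrictTotalDegree (j : Fin 14) (l : Fin 5) :
    clearedConicCoeff (X 0) (X 1) j l ∈ restrictTotalDegree (Fin 2) S 2 := by
  have hconst : (1 : MvPolynomial (Fin 2) S) ∈ restrictTotalDegree (Fin 2) S 2 :=
    (mem_restrictTotalDegree (Fin 2) 2 1).2 (by simp)
  have hX (i : Fin 2) : (X i : MvPolynomial (Fin 2) S).totalDegree ≤ 1 :=
    (totalDegree_monomial_le _ _).trans (Finsupp.sum_single_index rfl).le
  have hlin (i : Fin 2) : (X i : MvPolynomial (Fin 2) S) ∈ restrictTotalDegree (Fin 2) S 2 :=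
    (mem_restrictTotalDegree _ _ _).2 ((hX i).trans one_le_two)
  have hquad (i i' : Fin 2) :
      (X i * X i' : MvPolynomial (Fin 2) S) ∈ restrictTotalDegree (Fin 2) S 2 :=
    (mem_restrictTotalDegree _ _ _).2 ((totalDegree_mul _ _).trans (add_le_add (hX i) (hX i')))
  have hdouble {f : MvPolynomial (Fin 2) S} (hf : f ∈ restrictTotalDegree (Fin 2) S 2) :
      2 * f ∈ restrictTotalDegree (Fin 2) S 2 := by
    rw [two_mul]
    exact add_mem hf hf
  revert j l
  simp [clearedConicCoeff, Fin.forall_fin_succ, hconst, hlin, hquad, hdouble, pow_two]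

/-- The maximal minor of the `6 × 5` matrix `P * conicCoeff s t` omitting row `i`. It vanishes at
the solutions of `P·F = 0`, where `(1, a₁, a₂, a₃, a₄)` is a kernel vector of that matrix. -/
def conicMinor (P : Matrix (Fin 6) (Fin 14) S) (s t : S) (i : Fin 6) : S :=
  ((P * conicCoeff s t).submatrix i.succAbove id).det

theorem totalDegree_conicMinor_le [IsDomain S] (P : Matrix (Fin 6) (Fin 14) S) (i : Fin 6) :
    (conicMinor (P.map C : Matrix _ _ (MvPolynomial (Fin 2) S)) (X 0) (X 1) i).totalDegree ≤ 6 := by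
  let P' : Matrix (Fin 6) (Fin 14) (MvPolynomial (Fin 2) S) := P.map C
  change (conicMinor P' (X 0) (X 1) i).totalDegree ≤ 6
  by_cases h0 : conicMinor P' (X 0) (X 1) i = 0
  · rw [h0, totalDegree_zero]
    exact Nat.zero_le 6
  let E : Matrix (Fin 14) (Fin 5) (MvPolynomial (Fin 2) S) := clearedConicCoeff (X 0) (X 1)
  let M : Matrix (Fin 5) (Fin 5) (MvPolynomial (Fin 2) S) :=
    (P' * E).submatrix i.succAbove id
  have hM (r l : Fin 5) : (M r l).totalDegree ≤ 2 := by
    refine (mem_restrictTotalDegree (R := S) (Fin 2) 2 _).1 ?_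
    change ∑ j, P' (i.succAbove r) j * E j l ∈ _
    refine sum_mem fun j _ => ?_
    change C (P (i.succAbove r) j) * _ ∈ _
    rw [← smul_eq_C_mul]
    exact Submodule.smul_mem _ _ (clearedConicCoeff_mem_restrictTotalDegree j l)
  have hdet : M.det = conicMinor P' (X 0) (X 1) i * X 0 ^ 4 := by
    rw [conicMinor, ← det_degreeClearing (X 0) (X 1), ← Matrix.det_mul]
    simp only [M, E, ← conicCoeff_mul_degreeClearing, ← Matrix.mul_assoc]
    rfl
  have hdeg := totalDegree_det_le hM
  rw [hdet, totalDegree_mul_of_isDomain h0 (pow_ne_zero 4 (X_ne_zero 0)), totalDegree_X_pow,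
    Fintype.card_fin] at hdeg
  omega

theorem map_conicMinor (f : S →+* T) (P : Matrix (Fin 6) (Fin 14) S) (s t : S) (i : Fin 6) :
    f (conicMinor P s t i) = conicMinor (P.map f) (f s) (f t) i := by
  rw [conicMinor, RingHom.map_det, conicMinor, ← map_conicCoeff, ← Matrix.map_mul]
  rfl

theorem conicMinor_eq_zero {P : Matrix (Fin 6) (Fin 14) S} {x : Fin 6 → S}
    (h : P.mulVec (conicForm x) = 0) (i : Fin 6) : conicMinor P (x 4) (x 5) i = 0 := by
  let M := (P * conicCoeff (x 4) (x 5)).submatrix i.succAbove id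
  have hM : M.mulVec ![1, x 0, x 1, x 2, x 3] = 0 := by
    ext r
    rw [← conicCoeff_mulVec, Matrix.mulVec_mulVec] at h
    exact congrFun h (i.succAbove r)
  have hdet := adjugate_mulVec_mulVec M ![1, x 0, x 1, x 2, x 3]
  rw [hM, Matrix.mulVec_zero] at hdet
  change M.det = 0
  simpa using (congrFun hdet 0).symm

/-- The determinant of Cramer's rule for solving the first four of the equations `P·F = 0`, regarded
as affine-linear equations in `(a₁, a₂, a₃, a₄)`. -/
def conicCramer (P : Matrix (Fin 6) (Fin 14) S) (s t : S) : S :=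
  ((P * conicCoeff s t).submatrix (Fin.castAdd 2) Fin.succ).det

theorem map_conicCramer (f : S →+* T) (P : Matrix (Fin 6) (Fin 14) S) (s t : S) :
    f (conicCramer P s t) = conicCramer (P.map f) (f s) (f t) := by
  rw [conicCramer, RingHom.map_det, conicCramer, ← map_conicCoeff, ← Matrix.map_mul]
  rfl

theorem conicCramer_mul_mem {K A : Type*} [CommRing K] [CommRing A] [Algebra K A]
    {P : Matrix (Fin 6) (Fin 14) K} {x : Fin 6 → A}
    (h : (P.map (algebraMap K A)).mulVec (conicForm x) = 0) {B : Subalgebra K A}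
    (hs : x 4 ∈ B) (ht : x 5 ∈ B) (i : Fin 4) :
    conicCramer (P.map (algebraMap K A)) (x 4) (x 5) * x (Fin.castAdd 2 i) ∈ B := by
  let s : B := ⟨x 4, hs⟩
  let t : B := ⟨x 5, ht⟩
  let M : Matrix (Fin 4) (Fin 5) B :=
    (P.map (algebraMap K B) * conicCoeff s t).submatrix (Fin.castAdd 2) id
  have hdet : ((M.submatrix id Fin.succ).det : A) =
      conicCramer (P.map (algebraMap K A)) (x 4) (x 5) :=
    map_conicCramer (B.val : B →+* A) (P.map (algebraMap K B)) s t
  have hM : M.map B.val =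
      (P.map (algebraMap K A) * conicCoeff (x 4) (x 5)).submatrix (Fin.castAdd 2) id := by
    have hcoeff : conicCoeff (x 4) (x 5) = (conicCoeff s t).map (B.val : B →+* A) :=
      (map_conicCoeff (B.val : B →+* A) s t).symm
    rw [hcoeff, ← Matrix.submatrix_map, Matrix.map_mul]
    rfl
  rw [← hdet]
  refine det_mul_mem_of_mulVec_mem (x := fun i => x (Fin.castAdd 2 i)) (fun r => ?_) i
  have hrow : (M.map B.val).mulVec ![1, x 0, x 1, x 2, x 3] r = 0 := by
    rw [← conicCoeff_mulVec, Matrix.mulVec_mulVec] at h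
    rw [hM]
    exact congrFun h (Fin.castAdd 2 r)
  have hsplit : (M r 0 : A) +
      ((M.submatrix id Fin.succ).map B.val).mulVec (fun i => x (Fin.castAdd 2 i)) r = 0 := by
    rw [← hrow, Matrix.mulVec, Matrix.mulVec, dotProduct, dotProduct, Fin.sum_univ_succ]
    congr 1
    exact (mul_one _).symm
  rw [eq_neg_of_add_eq_zero_right hsplit]
  exact B.neg_mem (M r 0).property

end Conic

section Eliminant

variable {S T : Type*} [CommRing S] [CommRing T]

/-- The exponent vector of the monomial `s ^ a * t ^ b`. -/
noncomputable def bidegree (e : ℕ × ℕ) : Fin 2 →₀ ℕ :=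
  Finsupp.single 0 e.1 + Finsupp.single 1 e.2

theorem bidegree_injective : Function.Injective bidegree := by
  intro e e' h
  exact Prod.ext (by simpa [bidegree] using DFunLike.congr_fun h 0)
    (by simpa [bidegree] using DFunLike.congr_fun h 1)

theorem bidegree_apply (m : Fin 2 →₀ ℕ) : bidegree (m 0, m 1) = m := by
  ext i
  fin_cases i <;> simp [bidegree]

theorem bidegree_add (e e' : ℕ × ℕ) : bidegree (e + e') = bidegree e + bidegree e' := by
  simp only [bidegree, Prod.fst_add, Prod.snd_add, Finsupp.single_add]
  abel

theorem degree_bidegree (e : ℕ × ℕ) : (bidegree e).degree = e.1 + e.2 := by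
  simp [bidegree]

/-- The polynomial with the given list of terms `(c, a, b)`, standing for `c * s ^ a * t ^ b`; the
list makes its coefficients computable. -/
noncomputable def ofTerms (L : List (ℤ × ℕ × ℕ)) : MvPolynomial (Fin 2) ℤ :=
  (L.map fun z => monomial (bidegree z.2) z.1).sum

theorem coeff_ofTerms (L : List (ℤ × ℕ × ℕ)) (e : ℕ × ℕ) :
    coeff (bidegree e) (ofTerms L) = (L.map fun z => if z.2 = e then z.1 else 0).sum := by
  induction L with
  | nil => rfl
  | cons z L ih =>
    simp only [ofTerms, List.map_cons, List.sum_cons, coeff_add, coeff_monomial,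
      bidegree_injective.eq_iff] at ih ⊢
    rw [ih]

theorem ofTerms_mul_monomial (L : List (ℤ × ℕ × ℕ)) (e : ℕ × ℕ) :
    ofTerms L * monomial (bidegree e) 1 = ofTerms (L.map fun z => (z.1, z.2 + e)) := by
  induction L with
  | nil => exact zero_mul _
  | cons z L ih =>
    simp only [ofTerms, List.map_cons, List.sum_cons, List.map_map] at ih ⊢
    rw [add_mul, monomial_mul, mul_one, ← bidegree_add, ih]

/-- The exponents of the multipliers `1`, `b₁` and `b₂`. -/
def eliminantShift : Fin 3 → ℕ × ℕ :=
  ![(0, 0), (1, 0), (0, 1)]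

/-- The 18 relations of degree at most 7 between `b₁` and `b₂` modulo the ideal: the six maximal
minors of `P * conicCoeff b₁ b₂`, multiplied by `1`, `b₁` and `b₂`. -/
noncomputable def eliminant (P : Matrix (Fin 6) (Fin 14) S) (q : Fin 6 × Fin 3) :
    MvPolynomial (Fin 2) S :=
  conicMinor (P.map C) (X 0) (X 1) q.1 * monomial (bidegree (eliminantShift q.2)) 1

theorem totalDegree_eliminant_le [IsDomain S] (P : Matrix (Fin 6) (Fin 14) S)
    (q : Fin 6 × Fin 3) : (eliminant P q).totalDegree ≤ 7 := by
  have hshift : (eliminantShift q.2).1 + (eliminantShift q.2).2 ≤ 1 := by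
    generalize q.2 = k
    revert k
    decide
  rw [← degree_bidegree] at hshift
  exact (totalDegree_mul _ _).trans
    (add_le_add (totalDegree_conicMinor_le P q.1) ((totalDegree_monomial_le _ _).trans hshift))

theorem map_eliminant (f : S →+* T) (P : Matrix (Fin 6) (Fin 14) S) (q : Fin 6 × Fin 3) :
    MvPolynomial.map f (eliminant P q) = eliminant (P.map f) q := by
  rw [eliminant, map_mul, map_conicMinor, map_X, map_X, map_monomial, map_one, eliminant]
  congr 2
  ext1 i j
  exact map_C f _

theorem aeval_eliminant {K A : Type*} [CommRing K] [CommRing A] [Algebra K A]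
    {P : Matrix (Fin 6) (Fin 14) K} {x : Fin 6 → A}
    (h : (P.map (algebraMap K A)).mulVec (conicForm x) = 0) (q : Fin 6 × Fin 3) :
    aeval ![x 4, x 5] (eliminant P q) = 0 := by
  let φ : MvPolynomial (Fin 2) K →+* A := aeval (R := K) ![x 4, x 5]
  have hC : (P.map C).map φ = P.map (algebraMap K A) := by
    ext i j
    exact aeval_C _ _
  have h0 : φ (X 0) = x 4 := aeval_X _ 0
  have h1 : φ (X 1) = x 5 := aeval_X _ 1
  have hminor : φ (conicMinor (P.map C) (X 0) (X 1) q.1) = 0 := by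
    rw [map_conicMinor, hC, h0, h1, conicMinor_eq_zero h]
  change φ (eliminant P q) = 0
  rw [eliminant, map_mul, hminor, zero_mul]

/-- An ordering of the 18 eliminants which, together with `eliminantPivot`, makes
`eliminantMatrix sparseConic` triangular. -/
def eliminantIndex : Fin 18 → Fin 6 × Fin 3 :=
  ![(1, 2), (2, 1), (3, 2), (4, 1), (4, 2), (5, 1), (1, 0), (1, 1), (2, 2),
    (2, 0), (3, 1), (5, 2), (4, 0), (0, 0), (0, 1), (5, 0), (0, 2), (3, 0)]

/-- The exponents of the pivot monomials in `b₁` and `b₂`; they comprise all those of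
degree 7. -/
def eliminantPivot : Fin 18 → ℕ × ℕ :=
  ![(0, 7), (2, 5), (5, 2), (4, 3), (3, 4), (7, 0), (0, 6), (2, 4), (1, 6),
    (1, 5), (4, 2), (6, 1), (3, 3), (5, 0), (4, 1), (6, 0), (1, 3), (5, 1)]

/-- The coefficients of the eliminants at the pivot monomials. -/
noncomputable def eliminantMatrix (P : Matrix (Fin 6) (Fin 14) S) : Matrix (Fin 18) (Fin 18) S :=
  Matrix.of fun r p => coeff (bidegree (eliminantPivot p)) (eliminant P (eliminantIndex r))

theorem map_eliminantMatrix (f : S →+* T) (P : Matrix (Fin 6) (Fin 14) S) :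
    (eliminantMatrix P).map f = eliminantMatrix (P.map f) := by
  ext r p
  simp only [eliminantMatrix, Matrix.map_apply, Matrix.of_apply, ← map_eliminant, coeff_map]

/-- A sparse specialization of the parameters for which the eliminants have few terms. -/
def sparseConic : Matrix (Fin 6) (Fin 14) ℤ :=
  !![0, 0, 0, 0, 0, 0, 0, 0, 0, 0, 0, 0, 0, 1;
    0, 0, 0, 0, 0, 0, 0, 0, 0, 0, 0, 1, 0, 0;
    0, 0, 0, 0, -1, 1, 0, 0, 0, 0, 0, 0, 1, 0;
    0, 0, 1, 0, 0, 0, 0, 0, 0, 1, 0, 0, 0, 0;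
    1, 0, 0, 0, 0, 0, 0, 0, 1, 0, 0, 0, 0, 0;
    0, 0, 0, 0, 0, 0, 0, 0, 0, 0, 1, 0, 0, 0]

theorem sparseConic_mul_conicCoeff (s t : S) :
    sparseConic.map (Int.castRingHom S) * conicCoeff s t =
      !![t ^ 2, -(s * t), s ^ 2, 0, 0;
        0, 0, 0, -(s * t), s ^ 2;
        0, 0, 0, s - t ^ 2, s * t - 1;
        -(2 * t), s, 1, 0, 0;
        1, 0, 0, 0, t;
        0, t, -(2 * s), 0, 0] := by
  simp only [sparseConic, Int.reduceNeg, Int.coe_castRingHom, conicCoeff, neg_mul,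
    ← Matrix.ext_iff, Matrix.mul_apply, Matrix.map_apply, Matrix.of_apply, Matrix.cons_val',
    Matrix.cons_val_fin_one, Fin.sum_univ_succ, Fin.isValue, Matrix.cons_val_zero,
    Matrix.cons_val_succ, Finset.univ_unique, Fin.default_eq_zero, Finset.sum_const,
    Finset.card_singleton, one_smul, Fin.forall_fin_succ, mul_one, mul_zero, mul_neg, zero_add,
    add_zero, forall_const, Int.cast_zero, zero_mul, neg_zero, Int.cast_one, one_mul, and_self,
    Int.cast_neg, true_and, and_true]
  constructor <;> ring

theorem conicMinor_sparseConic (s t : S) :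
    conicMinor (sparseConic.map (Int.castRingHom S)) s t =
      ![s ^ 3 * t + s * t ^ 2 - 2 * s ^ 5, s * t ^ 4 - t ^ 6, -(s * t ^ 5),
        s ^ 5 * t - s ^ 3 * t ^ 2, s ^ 3 * t ^ 3 - s * t ^ 4, s ^ 6 - s ^ 2 * t ^ 2] := by
  ext i
  rw [conicMinor, sparseConic_mul_conicCoeff]
  fin_cases i <;> simp [Matrix.det_succ_row_zero, Fin.sum_univ_succ, Fin.succAbove] <;> ring

/-- The terms of the six minors of `sparseConic`. -/
def sparseMinor : Fin 6 → List (ℤ × ℕ × ℕ) :=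
  ![[(1, 3, 1), (1, 1, 2), (-2, 5, 0)], [(1, 1, 4), (-1, 0, 6)], [(-1, 1, 5)],
    [(1, 5, 1), (-1, 3, 2)], [(1, 3, 3), (-1, 1, 4)], [(1, 6, 0), (-1, 2, 2)]]

theorem eliminant_sparseConic (q : Fin 6 × Fin 3) :
    eliminant sparseConic q = ofTerms ((sparseMinor q.1).map fun z =>
      (z.1, z.2 + eliminantShift q.2)) := by
  rw [← ofTerms_mul_monomial, eliminant]
  congr 1
  have hterm (c : ℤ) (a b : ℕ) : monomial (bidegree (a, b)) c = C c * (X 0 ^ a * X 1 ^ b) := by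
    rw [X_pow_eq_monomial, X_pow_eq_monomial, monomial_mul, C_mul_monomial, one_mul, mul_one,
      bidegree]
  have hminor := congrFun
    (conicMinor_sparseConic (X 0) (X 1 : MvPolynomial (Fin 2) ℤ)) q.1
  rw [RingHom.ext_int (Int.castRingHom _) C] at hminor
  rw [hminor]
  generalize q.1 = i
  fin_cases i <;> simp [sparseMinor, ofTerms, hterm] <;> ring

theorem eliminantMatrix_sparseConic_apply (r p : Fin 18) :
    eliminantMatrix sparseConic r p = ((sparseMinor (eliminantIndex r).1).map fun z =>
      if z.2 + eliminantShift (eliminantIndex r).2 = eliminantPivot p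
        then z.1 else 0).sum := by
  rw [eliminantMatrix, Matrix.of_apply, eliminant_sparseConic, coeff_ofTerms, List.map_map]
  rfl

theorem det_eliminantMatrix_sparseConic_ne_zero : (eliminantMatrix sparseConic).det ≠ 0 := by
  have htri : (eliminantMatrix sparseConic).IsUpperTriangular := by
    intro r p hrp
    have hlt : p < r := hrp
    rw [eliminantMatrix_sparseConic_apply]
    revert r p
    decide
  rw [Matrix.det_of_isUpperTriangular htri, Finset.prod_ne_zero_iff]
  simp only [eliminantMatrix_sparseConic_apply]
  decide

end Eliminant

section Derivatives

variable {S T : Type*} [CommRing S] [CommRing T]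

theorem map_conicForm (f : S →+* T) (x : Fin 6 → S) (j : Fin 14) :
    f (conicForm x j) = conicForm (fun i => f (x i)) j := by
  revert j
  simp [conicForm, Fin.forall_fin_succ, map_ofNat]

/-- The partial derivatives of `conicForm`, with one row for each variable. -/
def conicPartial (x : Fin 6 → S) : Matrix (Fin 6) (Fin 14) S :=
  !![0, 1, 0, 0, 0, 0, 0, 0, 0, x 4, x 5, 0, 0, -(x 4 * x 5);
    0, 0, 1, 0, 0, 0, 0, 0, 0, 0, -2 * x 4, 0, 0, x 4 ^ 2;
    0, 0, 0, 1, 0, x 4, x 5, 0, 0, 0, 0, -(x 4 * x 5), -x 5 ^ 2, 0;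
    0, 0, 0, 0, 1, 0, 0, x 4, x 5, 0, 0, x 4 ^ 2, x 4 * x 5, 0;
    0, 0, 0, 0, 0, x 2, 0, x 3, 0, x 0, -2 * x 1, 2 * x 3 * x 4 - x 2 * x 5, x 3 * x 5,
      2 * x 1 * x 4 - x 0 * x 5;
    0, 0, 0, 0, 0, 0, x 2, 0, x 3, -2, x 0, -(x 2 * x 4), x 3 * x 4 - 2 * x 2 * x 5,
      2 * x 5 - x 0 * x 4]

theorem pderiv_conicForm (i : Fin 6) (j : Fin 14) :
    pderiv i (conicForm (X : Fin 6 → MvPolynomial (Fin 6) S) j) = conicPartial X i j := by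
  have htwo (i : Fin 6) : pderiv i (2 : MvPolynomial (Fin 6) S) = 0 := (pderiv i).map_natCast 2
  revert i j
  simp only [conicForm, Fin.isValue, conicPartial, neg_mul, Matrix.of_apply, Matrix.cons_val',
    Matrix.cons_val_fin_one, Fin.forall_fin_succ, Matrix.cons_val_zero, Derivation.map_one_eq_zero,
    Matrix.cons_val_succ, pderiv_X, Pi.single_apply, Derivation.leibniz, smul_eq_mul, mul_ite,
    mul_one, mul_zero, map_sub, htwo, add_zero, map_add, Derivation.leibniz_pow,
    Nat.add_one_sub_one, pow_one, smul_ite, nsmul_eq_mul, Nat.cast_ofNat, forall_const, ↓reduceIte,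
    one_ne_zero, Fin.reduceEq, zero_add, sub_zero, sub_self, zero_sub, neg_inj,
    true_and, Fin.succ_zero_eq_one, zero_ne_one, and_self, and_true, Fin.succ_one_eq_two, mul_neg,
    Fin.reduceSucc, ite_eq_right_iff, IsEmpty.forall_iff]
  split_ands <;> ring

theorem map_conicPartial (f : S →+* T) (x : Fin 6 → S) :
    (conicPartial x).map f = conicPartial fun i => f (x i) := by
  simp [conicPartial, ← Matrix.ext_iff, Fin.forall_fin_succ, map_ofNat]

/-- The system `P·F` of six equations. -/
noncomputable def conicSystem (P : Matrix (Fin 6) (Fin 14) S) : Fin 6 → MvPolynomial (Fin 6) S :=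
  (P.map C).mulVec (conicForm X)

theorem map_conicSystem (f : S →+* T) (P : Matrix (Fin 6) (Fin 14) S) (i : Fin 6) :
    MvPolynomial.map f (conicSystem P i) = conicSystem (P.map f) i := by
  simp [conicSystem, Matrix.mulVec, dotProduct, map_conicForm]

theorem eval₂Hom_conicSystem (f : S →+* T) (P : Matrix (Fin 6) (Fin 14) S) (y : Fin 6 → T)
    (i : Fin 6) :
    eval₂Hom f y (conicSystem P i) = (P.map f).mulVec (conicForm y) i := by
  simp only [conicSystem, Matrix.mulVec, dotProduct, map_sum, map_mul, Matrix.map_apply,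
    map_conicForm, eval₂Hom_C, eval₂Hom_X']

theorem jacobianMatrix_conicSystem (P : Matrix (Fin 6) (Fin 14) S) :
    jacobianMatrix (conicSystem P) =
      conicPartial (X : Fin 6 → MvPolynomial (Fin 6) S) *
        (P.map C : Matrix (Fin 6) (Fin 14) (MvPolynomial (Fin 6) S)).transpose := by
  ext1 i j
  simp only [jacobianMatrix, conicSystem, Matrix.mulVec, dotProduct, map_sum, Matrix.of_apply,
    Matrix.map_apply, pderiv_C_mul, pderiv_conicForm, Matrix.mul_apply, Matrix.transpose_apply]
  exact Finset.sum_congr rfl fun l _ => mul_comm _ _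

theorem eval₂Hom_det_jacobianMatrix (f : S →+* T) (P : Matrix (Fin 6) (Fin 14) S)
    (y : Fin 6 → T) :
    eval₂Hom f y (jacobianMatrix (conicSystem P)).det =
      (conicPartial y * (P.map f).transpose).det := by
  have hC : (P.map C : Matrix (Fin 6) (Fin 14) (MvPolynomial (Fin 6) S)).map (eval₂Hom f y) =
      P.map f := by
    ext i j
    exact eval₂Hom_C f y _
  rw [jacobianMatrix_conicSystem, RingHom.map_det, RingHom.mapMatrix_apply, Matrix.map_mul,
    map_conicPartial, Matrix.transpose_map, hC]
  simp only [eval₂Hom_X']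

/-- The 18 monomials of degree at most 2 used as a basis of the quotient, evaluated at `x`. -/
def quadraticBasis (x : Fin 6 → S) : Fin 18 → S :=
  ![1, x 0, x 1, x 2, x 3, x 4, x 5,
    x 0 * x 0, x 0 * x 1, x 0 * x 2, x 0 * x 3, x 0 * x 4, x 0 * x 5,
    x 1 * x 1, x 1 * x 2, x 1 * x 3, x 1 * x 5, x 2 * x 2]

theorem map_quadraticBasis (f : S →+* T) (x : Fin 6 → S) (i : Fin 18) :
    f (quadraticBasis x i) = quadraticBasis (fun m => f (x m)) i := by
  revert i
  simp [quadraticBasis, Fin.forall_fin_succ]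

theorem totalDegree_quadraticBasis_le_one (i : Fin 7) :
    (quadraticBasis (X : Fin 6 → MvPolynomial (Fin 6) S) (Fin.castAdd 11 i)).totalDegree ≤ 1 := by
  have hX (m : Fin 6) : (X m : MvPolynomial (Fin 6) S).totalDegree ≤ 1 :=
    (totalDegree_monomial_le _ _).trans (Finsupp.sum_single_index rfl).le
  revert i
  simp [quadraticBasis, Fin.forall_fin_succ, hX]

theorem totalDegree_quadraticBasis_le_two (i : Fin 18) :
    (quadraticBasis (X : Fin 6 → MvPolynomial (Fin 6) S) i).totalDegree ≤ 2 := by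
  have hX (m : Fin 6) : (X m : MvPolynomial (Fin 6) S).totalDegree ≤ 1 :=
    (totalDegree_monomial_le _ _).trans (Finsupp.sum_single_index rfl).le
  have hlin (m : Fin 6) := (hX m).trans one_le_two
  have hquad (m m' : Fin 6) := (totalDegree_mul (X m) (X m')).trans (add_le_add (hX m) (hX m'))
  revert i
  simp [quadraticBasis, Fin.forall_fin_succ, hlin, hquad]

end Derivatives

section Specialization

/-- A specialization of the parameters modulo 29 for which the system has 18 simple rational
zeros. -/
def splitConic : Matrix (Fin 6) (Fin 14) (ZMod 29) :=
  !![-4, 0, 0, 8, -4, -2, 4, -3, 0, 2, 0, 1, 0, -1;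
    9, -5, 6, 0, -4, 0, 10, -2, -7, -5, -6, -9, -3, 6;
    -13, -8, 4, 1, -3, 1, 0, -2, -3, 4, 2, 1, 1, 1;
    -6, 3, 13, -7, -11, 11, -10, -11, -14, -13, 8, -10, -7, -4;
    4, 0, 0, 0, 0, 0, 0, 0, 0, -2, 0, 0, 0, 1;
    -13, -8, 4, 0, 0, 0, 0, 0, 0, 4, 2, 0, 0, 1]

/-- The zeros of the system with parameters `splitConic`. -/
def splitZero : Fin 18 → Fin 6 → ZMod 29 :=
  ![![12, 8, 1, 16, 23, 5], ![22, 0, 18, 2, 24, 4], ![24, 23, 16, 15, 15, 13],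
    ![27, 21, 18, 7, 19, 9], ![8, 3, 9, 18, 4, 3], ![16, 0, 9, 27, 4, 4], ![0, 28, 16, 16, 4, 2],
    ![19, 5, 16, 25, 4, 8], ![24, 24, 7, 27, 11, 7], ![20, 20, 5, 11, 15, 10],
    ![12, 1, 7, 27, 5, 17], ![2, 7, 26, 6, 4, 24], ![19, 19, 25, 15, 22, 6],
    ![18, 16, 26, 2, 4, 10], ![14, 4, 18, 28, 10, 28], ![25, 17, 0, 0, 7, 14],
    ![1, 0, 0, 0, 6, 4], ![11, 24, 0, 0, 3, 7]]

/-- The inverses of the Jacobian matrices at the points `splitZero`. -/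
def splitJacobianInv : Fin 18 → Matrix (Fin 6) (Fin 6) (ZMod 29) :=
  ![
    !![0, 0, 1, 5, 0, 0; 12, 20, 12, 7, 7, 22; 12, 3, 9, 11, 20, 28; 0, 0, 17, 11, 0, 0;
      3, 20, 20, 2, 24, 5; 18, 20, 0, 17, 9, 1],
    !![7, 27, 25, 12, 2, 27; 6, 19, 25, 27, 10, 19; 16, 13, 2, 25, 28, 13; 0, 0, 4, 23, 0, 0;
      8, 27, 3, 16, 2, 27; 25, 22, 20, 21, 11, 6],
    !![0, 0, 7, 27, 0, 0; 0, 0, 8, 22, 0, 0; 11, 15, 17, 15, 2, 10; 21, 12, 20, 14, 9, 20;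
      28, 2, 7, 16, 1, 28; 13, 9, 9, 13, 27, 19],
    !![1, 3, 10, 19, 9, 20; 0, 0, 7, 14, 0, 0; 2, 4, 24, 19, 16, 3; 15, 16, 16, 1, 19, 10;
      17, 6, 19, 8, 9, 20; 20, 27, 8, 6, 21, 18],
    !![2, 20, 11, 20, 20, 14; 2, 11, 0, 24, 0, 22; 17, 21, 10, 3, 0, 13; 0, 0, 1, 2, 0, 0;
      6, 7, 3, 11, 20, 18; 8, 3, 0, 17, 0, 16],
    !![19, 28, 3, 16, 24, 18; 27, 27, 0, 5, 0, 7; 0, 0, 27, 7, 0, 0; 0, 0, 26, 20, 0, 0;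
      25, 28, 8, 2, 24, 18; 22, 10, 19, 16, 0, 13],
    !![20, 20, 1, 1, 20, 20; 0, 0, 19, 19, 0, 0; 3, 1, 17, 19, 0, 4; 12, 4, 0, 24, 0, 16;
      2, 8, 11, 24, 20, 19; 8, 10, 28, 26, 0, 25],
    !![11, 17, 28, 15, 24, 28; 0, 0, 28, 22, 0, 0; 0, 0, 12, 6, 0, 0; 17, 1, 0, 5, 0, 13;
      0, 24, 20, 17, 24, 28; 18, 1, 14, 8, 0, 4],
    !![13, 19, 17, 19, 14, 28; 21, 13, 16, 12, 15, 4; 15, 27, 4, 11, 8, 28; 17, 5, 23, 10, 8, 6;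
      27, 6, 17, 19, 23, 13; 13, 14, 18, 20, 16, 19],
    !![5, 9, 9, 16, 17, 19; 22, 12, 11, 1, 27, 13; 22, 4, 25, 14, 6, 27; 24, 21, 15, 4, 11, 1;
      16, 10, 18, 1, 19, 6; 18, 3, 7, 10, 12, 1],
    !![26, 3, 6, 12, 5, 9; 0, 5, 5, 11, 21, 23; 13, 7, 9, 8, 14, 24; 0, 21, 11, 1, 7, 27;
      21, 27, 20, 8, 17, 18; 17, 6, 4, 9, 20, 16],
    !![5, 5, 21, 27, 18, 11; 0, 0, 6, 28, 0, 0; 9, 11, 9, 10, 0, 12; 0, 0, 8, 12, 0, 0;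
      19, 0, 26, 15, 18, 11; 22, 2, 5, 0, 0, 17],
    !![18, 25, 23, 19, 0, 0; 28, 26, 26, 4, 0, 0; 25, 17, 14, 15, 15, 16; 13, 10, 27, 22, 0, 0;
      4, 14, 3, 16, 26, 3; 14, 5, 9, 23, 4, 23],
    !![25, 17, 12, 5, 12, 7; 27, 23, 2, 18, 0, 0; 11, 4, 9, 25, 0, 0; 14, 13, 2, 18, 0, 0;
      6, 0, 17, 1, 12, 4; 6, 25, 26, 22, 0, 12],
    !![14, 13, 3, 18, 14, 13; 9, 27, 9, 14, 0, 0; 14, 13, 26, 26, 10, 1; 15, 16, 7, 27, 0, 0;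
      10, 17, 25, 20, 23, 27; 17, 2, 12, 17, 14, 17],
    !![10, 18, 1, 25, 12, 18; 25, 21, 0, 0, 11, 22; 16, 3, 5, 10, 14, 28; 18, 8, 0, 0, 25, 24;
      25, 19, 1, 25, 27, 19; 15, 14, 24, 19, 20, 0],
    !![1, 1, 15, 15, 4, 4; 3, 3, 0, 0, 12, 12; 0, 22, 20, 13, 17, 1; 5, 0, 0, 0, 28, 0;
      18, 1, 15, 15, 13, 4; 12, 19, 9, 16, 9, 25],
    !![10, 1, 0, 7, 21, 5; 22, 8, 0, 0, 7, 21; 22, 8, 18, 26, 23, 11; 9, 27, 0, 0, 16, 19;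
      11, 9, 0, 7, 27, 24; 4, 26, 11, 3, 10, 21]]

/-- The inverse of the matrix of values of `quadraticBasis` at the points `splitZero`. -/
def splitValueInv : Matrix (Fin 18) (Fin 18) (ZMod 29) :=
  !![10, 14, 4, 1, 27, 28, 25, 25, 1, 21, 11, 9, 8, 1, 5, 5, 8, 1;
    14, 7, 10, 11, 2, 26, 14, 18, 25, 10, 13, 15, 19, 28, 22, 21, 9, 26;
    4, 1, 5, 2, 6, 16, 26, 26, 21, 19, 2, 14, 28, 23, 9, 15, 11, 4;
    6, 28, 5, 8, 1, 18, 0, 28, 15, 9, 19, 4, 25, 19, 12, 1, 1, 4;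
    8, 23, 14, 4, 0, 23, 11, 25, 9, 1, 6, 23, 24, 8, 8, 25, 3, 17;
    15, 11, 17, 26, 0, 5, 11, 16, 0, 11, 20, 27, 14, 17, 12, 28, 18, 13;
    25, 18, 25, 11, 25, 17, 14, 5, 13, 13, 24, 20, 28, 26, 23, 4, 15, 13;
    3, 20, 16, 28, 14, 16, 20, 19, 8, 17, 18, 17, 20, 16, 20, 25, 0, 13;
    2, 8, 2, 8, 1, 21, 9, 27, 25, 28, 26, 11, 20, 24, 12, 27, 23, 16;
    13, 25, 0, 17, 11, 19, 4, 5, 17, 17, 9, 20, 1, 0, 10, 28, 12, 24;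
    16, 26, 26, 9, 28, 9, 14, 15, 8, 1, 22, 28, 12, 12, 23, 24, 28, 18;
    27, 9, 8, 28, 21, 7, 13, 2, 20, 14, 0, 26, 12, 0, 11, 7, 9, 18;
    14, 7, 17, 14, 27, 20, 15, 25, 21, 10, 8, 28, 1, 17, 25, 25, 13, 3;
    26, 12, 3, 22, 0, 12, 7, 27, 21, 24, 9, 13, 19, 24, 16, 6, 16, 4;
    4, 20, 1, 24, 5, 2, 27, 7, 1, 9, 23, 11, 19, 5, 0, 23, 9, 13;
    21, 25, 1, 7, 28, 11, 1, 2, 25, 13, 4, 21, 13, 10, 3, 25, 23, 28;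
    27, 14, 8, 9, 28, 5, 6, 10, 3, 17, 3, 2, 10, 28, 20, 5, 1, 7;
    23, 23, 23, 23, 5, 22, 5, 6, 21, 3, 10, 26, 3, 11, 27, 3, 20, 7]

instance : Fact (Nat.Prime 29) := ⟨by norm_num⟩

theorem splitConic_mulVec_conicForm (k : Fin 18) :
    splitConic.mulVec (conicForm (splitZero k)) = 0 := by
  revert k
  decide +kernel

theorem det_splitJacobian_ne_zero (k : Fin 18) :
    (conicPartial (splitZero k) * splitConic.transpose).det ≠ 0 := by
  refine Matrix.det_ne_zero_of_right_inverse (B := splitJacobianInv k) ?_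
  revert k
  decide +kernel

theorem conicCramer_splitConic_ne_zero (k : Fin 18) :
    conicCramer splitConic (splitZero k 4) (splitZero k 5) ≠ 0 := by
  revert k
  decide +kernel

theorem det_splitValue_ne_zero :
    (Matrix.of fun k i => quadraticBasis (splitZero k) i).det ≠ 0 := by
  refine Matrix.det_ne_zero_of_right_inverse (B := splitValueInv) ?_
  decide +kernel

end Specialization

section ScaledBasis

variable {S T : Type*} [CommRing S] [CommRing T]

/-- The polynomials of `quadraticBasis`, multiplied by the cube of the Cramer determinant
`conicCramer`; since they have degree at most 2, this puts them into the subalgebra generated by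
`b₁` and `b₂` with one power of the determinant to spare. -/
noncomputable def scaledBasis (P : Matrix (Fin 6) (Fin 14) S) (i : Fin 18) :
    MvPolynomial (Fin 6) S :=
  conicCramer (P.map C) (X 4) (X 5) ^ 3 * quadraticBasis X i

theorem map_scaledBasis (f : S →+* T) (P : Matrix (Fin 6) (Fin 14) S) (i : Fin 18) :
    MvPolynomial.map f (scaledBasis P i) = scaledBasis (P.map f) i := by
  have hC : (P.map C : Matrix (Fin 6) (Fin 14) (MvPolynomial (Fin 6) S)).map
      (MvPolynomial.map f) = (P.map f).map C := by
    ext1 i j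
    exact map_C f _
  simp only [scaledBasis, map_mul, map_pow, map_conicCramer, hC, map_quadraticBasis, map_X]

theorem eval₂Hom_scaledBasis (f : S →+* T) (P : Matrix (Fin 6) (Fin 14) S) (y : Fin 6 → T)
    (i : Fin 18) :
    eval₂Hom f y (scaledBasis P i) =
      conicCramer (P.map f) (y 4) (y 5) ^ 3 * quadraticBasis y i := by
  have hC : (P.map C : Matrix (Fin 6) (Fin 14) (MvPolynomial (Fin 6) S)).map (eval₂Hom f y) =
      P.map f := by
    ext i j
    exact eval₂Hom_C f y _
  simp only [scaledBasis, map_mul, map_pow, map_conicCramer, hC, map_quadraticBasis, eval₂Hom_X']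

end ScaledBasis

section Bounds

variable {K : Type*} [Field K] {P : Matrix (Fin 6) (Fin 14) K}

theorem finite_range_aeval_of_det_eliminantMatrix {A : Type*} [CommRing A] [Algebra K A]
    {x : Fin 6 → A} (h : (P.map (algebraMap K A)).mulVec (conicForm x) = 0)
    (helim : (eliminantMatrix P).det ≠ 0) :
    Module.Finite K (aeval (R := K) ![x 4, x 5]).range ∧
      Module.finrank K (aeval (R := K) ![x 4, x 5]).range ≤ 18 := by
  refine finite_range_aeval_of_pivots (D := 7) (rel := fun r => eliminant P (eliminantIndex r))
    (pivot := fun p => bidegree (eliminantPivot p)) (fun r => aeval_eliminant h _)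
    (fun r => totalDegree_eliminant_le P _) helim (fun p => ?_) fun m hm => ?_
  · rw [degree_bidegree]
    revert p
    decide
  · have htop : ∀ a ≤ 7, ∃ p, eliminantPivot p = (a, 7 - a) := by decide
    rw [← bidegree_apply m, degree_bidegree] at hm
    obtain ⟨p, hp⟩ := htop (m 0) (Nat.le.intro hm)
    have hm1 : 7 - m 0 = m 1 := Nat.sub_eq_of_eq_add' hm.symm
    exact ⟨p, (congrArg bidegree hp).trans (by rw [hm1, bidegree_apply])⟩

theorem range_aeval_eq_top_of_linearIndependent {A : Type*} [CommRing A] [Algebra K A]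
    {x : Fin 6 → A} (h : (P.map (algebraMap K A)).mulVec (conicForm x) = 0)
    (hx : (aeval (R := K) x).range = ⊤) (helim : (eliminantMatrix P).det ≠ 0)
    (hind : LinearIndependent K fun i =>
      conicCramer (P.map (algebraMap K A)) (x 4) (x 5) ^ 3 * quadraticBasis x i) :
    (aeval (R := K) ![x 4, x 5]).range = ⊤ := by
  set B := (aeval (R := K) ![x 4, x 5]).range
  obtain ⟨hfin, hB⟩ := finite_range_aeval_of_det_eliminantMatrix h helim
  have hs : x 4 ∈ B := ⟨X 0, aeval_X _ _⟩
  have ht : x 5 ∈ B := ⟨X 1, aeval_X _ _⟩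
  have hδ : conicCramer (P.map (algebraMap K A)) (x 4) (x 5) ∈ B := by
    have := map_conicCramer (B.val : B →+* A) (P.map (algebraMap K B)) ⟨x 4, hs⟩ ⟨x 5, ht⟩
    exact this ▸ Subtype.property _
  have hδx (i : Fin 6) : conicCramer (P.map (algebraMap K A)) (x 4) (x 5) * x i ∈ B := by
    induction i using Fin.addCases (m := 4) (n := 2) with
    | left i => exact conicCramer_mul_mem h hs ht i
    | right i =>
      refine mul_mem hδ ?_
      fin_cases i
      exacts [hs, ht]
  refine subalgebra_eq_top_of_linearIndependent (q := quadraticBasis X) hx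
    (hB.trans_eq (Fintype.card_fin 18).symm) hδ hδx totalDegree_quadraticBasis_le_two ?_
  have hq (i : Fin 18) : aeval x (quadraticBasis (X : Fin 6 → MvPolynomial (Fin 6) K) i) =
      quadraticBasis x i := by
    simpa using map_quadraticBasis (aeval (R := K) x : MvPolynomial (Fin 6) K →+* A) X i
  simpa only [hq] using hind

theorem finite_and_finrank_eq_eighteen {A : Type*} [CommRing A] [Algebra K A]
    {x : Fin 6 → A} (h : (P.map (algebraMap K A)).mulVec (conicForm x) = 0)
    (hx : (aeval (R := K) x).range = ⊤) (helim : (eliminantMatrix P).det ≠ 0)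
    (hind : LinearIndependent K fun i =>
      conicCramer (P.map (algebraMap K A)) (x 4) (x 5) ^ 3 * quadraticBasis x i) :
    Module.Finite K A ∧ Module.finrank K A = 18 := by
  have htop := range_aeval_eq_top_of_linearIndependent h hx helim hind
  obtain ⟨hfin, hle⟩ := finite_range_aeval_of_det_eliminantMatrix h helim
  rw [htop] at hfin hle
  have hfinA : Module.Finite K A := .equiv (Subalgebra.topEquiv (R := K)).toLinearEquiv
  have hfinrank : Module.finrank K (⊤ : Subalgebra K A) = Module.finrank K A :=
    (Subalgebra.topEquiv (R := K)).toLinearEquiv.finrank_eq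
  exact ⟨hfinA, (hfinrank ▸ hle).antisymm
    ((Fintype.card_fin 18).symm.trans_le hind.fintype_card_le_finrank)⟩

theorem finite_and_finrank_quotient_conicSystem (helim : (eliminantMatrix P).det ≠ 0)
    (hind : LinearIndependent K fun i =>
      Ideal.Quotient.mk (Ideal.span (Set.range (conicSystem P))) (scaledBasis P i)) :
    Module.Finite K (MvPolynomial (Fin 6) K ⧸ Ideal.span (Set.range (conicSystem P))) ∧
      Module.finrank K (MvPolynomial (Fin 6) K ⧸ Ideal.span (Set.range (conicSystem P))) = 18 := by
  set I := Ideal.span (Set.range (conicSystem P))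
  let x : Fin 6 → MvPolynomial (Fin 6) K ⧸ I := fun i => Ideal.Quotient.mk I (X i)
  have hmk : Ideal.Quotient.mkₐ K I = aeval x := algHom_ext fun i => (aeval_X x i).symm
  have hmk_apply (f : MvPolynomial (Fin 6) K) :
      Ideal.Quotient.mk I f = eval₂Hom (algebraMap K _) x f := DFunLike.congr_fun hmk f
  refine finite_and_finrank_eq_eighteen (x := x) (funext fun i => ?_) ?_ helim ?_
  · rw [← eval₂Hom_conicSystem, ← hmk_apply, Pi.zero_apply, Ideal.Quotient.eq_zero_iff_mem]
    exact Ideal.subset_span (Set.mem_range_self i)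
  · rw [← hmk, AlgHom.range_eq_top]
    exact Ideal.Quotient.mk_surjective
  · simpa only [hmk_apply, eval₂Hom_scaledBasis] using hind

theorem linearIndependent_quadraticBasis_of_scaledBasis {I : Ideal (MvPolynomial (Fin 6) K)}
    (hind : LinearIndependent K fun i => Ideal.Quotient.mk I (scaledBasis P i)) :
    LinearIndependent K fun i => Ideal.Quotient.mk I (quadraticBasis X i) := by
  refine .of_comp (LinearMap.mulLeft K
    (Ideal.Quotient.mk I (conicCramer (P.map C) (X 4) (X 5) ^ 3))) ?_
  simp only [scaledBasis, map_mul] at hind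
  exact hind

end Bounds

section HilbertFunctionValues

variable {K : Type*} [Field K] {I : Ideal (MvPolynomial (Fin 6) K)}

theorem choose_sub_finrank_inf_restrictTotalDegree_one
    (hind : LinearIndependent K fun i => Ideal.Quotient.mk I (quadraticBasis X i)) :
    (6 + 1).choose 1 -
      Module.finrank K ↥(I.restrictScalars K ⊓ restrictTotalDegree (Fin 6) K 1) = 7 := by
  have hHF := choose_sub_finrank_inf_restrictTotalDegree I 1
  have hupper := Submodule.finrank_map_le (Ideal.Quotient.mkₐ K I).toLinearMap
    (restrictTotalDegree (Fin 6) K 1)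
  have hlower := card_le_finrank_map_restrictTotalDegree totalDegree_quadraticBasis_le_one
    (hind.comp _ (Fin.castAdd_injective 7 11))
  rw [finrank_restrictTotalDegree] at hupper
  rw [Fintype.card_fin] at hHF hupper hlower
  exact hHF.trans (hupper.antisymm hlower)

theorem choose_sub_finrank_inf_restrictTotalDegree_of_two_le
    [Module.Finite K (MvPolynomial (Fin 6) K ⧸ I)]
    (hfinrank : Module.finrank K (MvPolynomial (Fin 6) K ⧸ I) = 18)
    (hind : LinearIndependent K fun i => Ideal.Quotient.mk I (quadraticBasis X i))
    {d : ℕ} (hd : 2 ≤ d) :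
    (6 + d).choose d -
      Module.finrank K ↥(I.restrictScalars K ⊓ restrictTotalDegree (Fin 6) K d) = 18 := by
  have hHF := choose_sub_finrank_inf_restrictTotalDegree I d
  have hupper := hfinrank ▸ Submodule.finrank_le
    ((restrictTotalDegree (Fin 6) K d).map (Ideal.Quotient.mkₐ K I).toLinearMap)
  have hlower := card_le_finrank_map_restrictTotalDegree
    (fun i => (totalDegree_quadraticBasis_le_two i).trans hd) hind
  rw [Fintype.card_fin] at hHF hlower
  exact hHF.trans (hupper.antisymm hlower)

end HilbertFunctionValues

section GenericParameters

attribute [local instance] algebraMvPolynomial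

instance isFractionRing_paramField :
    IsFractionRing (MvPolynomial (Fin 6 × Fin 14) ℤ) ParamField :=
  isFractionRing_of_isLocalization_of_isFractionRing ((nonZeroDivisors ℤ).map C)
    (MvPolynomial (Fin 6 × Fin 14) ℚ) ParamField

theorem linearIndependent_scaledBasis_generic :
    LinearIndependent (MvPolynomial (Fin 6 × Fin 14) ℤ) fun i =>
      Ideal.Quotient.mk
        (Ideal.span (Set.range (conicSystem (Matrix.mvPolynomialX (Fin 6) (Fin 14) ℤ))))
        (scaledBasis (Matrix.mvPolynomialX (Fin 6) (Fin 14) ℤ) i) := by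
  let φ : MvPolynomial (Fin 6 × Fin 14) ℤ →+* ZMod 29 :=
    eval₂Hom (Int.castRingHom (ZMod 29)) fun p => splitConic p.1 p.2
  have hP : (Matrix.mvPolynomialX (Fin 6) (Fin 14) ℤ).map φ = splitConic := by
    ext i j
    exact eval₂Hom_X' _ _ _
  have hφ : Function.Surjective φ := fun c => by
    obtain ⟨n, rfl⟩ := ZMod.intCast_surjective c
    exact ⟨n, map_intCast φ n⟩
  refine linearIndependent_quotient_of_zeros hφ _ splitZero _ (fun k i => ?_) (fun k => ?_) ?_
  · rw [eval₂Hom_conicSystem, hP, splitConic_mulVec_conicForm, Pi.zero_apply]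
  · rw [eval₂Hom_det_jacobianMatrix, hP]
    exact det_splitJacobian_ne_zero k
  · have hdet := Matrix.det_mul_column
      (fun k => conicCramer splitConic (splitZero k 4) (splitZero k 5) ^ 3)
      (Matrix.of fun k i => quadraticBasis (splitZero k) i)
    simp only [Matrix.of_apply] at hdet
    simp only [eval₂Hom_scaledBasis, hP, hdet]
    exact mul_ne_zero
      (Finset.prod_ne_zero_iff.2 fun k _ => pow_ne_zero 3 (conicCramer_splitConic_ne_zero k))
      det_splitValue_ne_zero

theorem det_eliminantMatrix_generic_ne_zero :
    (eliminantMatrix (Matrix.mvPolynomialX (Fin 6) (Fin 14) ℤ)).det ≠ 0 := by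
  let φ : MvPolynomial (Fin 6 × Fin 14) ℤ →+* ℤ :=
    eval₂Hom (RingHom.id ℤ) fun p => sparseConic p.1 p.2
  have hP : (Matrix.mvPolynomialX (Fin 6) (Fin 14) ℤ).map φ = sparseConic := by
    ext i j
    exact eval₂Hom_X' _ _ _
  intro hdet
  apply det_eliminantMatrix_sparseConic_ne_zero
  rw [← hP, ← map_eliminantMatrix, ← RingHom.mapMatrix_apply, ← RingHom.map_det, hdet, map_zero]

/-- The generic matrix `P`, with entries in `ParamField`. -/
noncomputable def paramMatrix : Matrix (Fin 6) (Fin 14) ParamField :=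
  (Matrix.mvPolynomialX (Fin 6) (Fin 14) ℤ).map (algebraMap _ ParamField)

theorem det_eliminantMatrix_paramMatrix_ne_zero : (eliminantMatrix paramMatrix).det ≠ 0 := by
  rw [paramMatrix, ← map_eliminantMatrix, ← RingHom.mapMatrix_apply, ← RingHom.map_det]
  exact (map_ne_zero_iff _ (IsFractionRing.injective _ ParamField)).2
    det_eliminantMatrix_generic_ne_zero

theorem paramMatrix_apply (i : Fin 6) (j : Fin 14) :
    paramMatrix i j = algebraMap (MvPolynomial (Fin 6 × Fin 14) ℚ) ParamField (X (i, j)) := by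
  rw [paramMatrix, Matrix.map_apply, Matrix.mvPolynomialX_apply,
    IsScalarTower.algebraMap_apply _ (MvPolynomial (Fin 6 × Fin 14) ℚ) ParamField, algebraMap_def,
    map_X]

theorem conicIdeal_eq_span : conicIdeal = Ideal.span (Set.range (conicSystem paramMatrix)) := by
  have hgen (i : Fin 6) : conicSystem paramMatrix i = ∑ j : Fin 14,
      C (algebraMap (MvPolynomial (Fin 6 × Fin 14) ℚ) ParamField (X (i, j))) * conicFK j := by
    simp only [conicSystem, Matrix.mulVec, dotProduct, Matrix.map_apply, paramMatrix_apply]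
    rfl
  rw [conicIdeal, ← funext hgen]

theorem linearIndependent_scaledBasis_paramMatrix :
    LinearIndependent ParamField fun i =>
      Ideal.Quotient.mk (Ideal.span (Set.range (conicSystem paramMatrix)))
        (scaledBasis paramMatrix i) := by
  have hmap := linearIndependent_quotient_map ParamField _ _ linearIndependent_scaledBasis_generic
  have hspan : (Ideal.span (Set.range (conicSystem (Matrix.mvPolynomialX (Fin 6) (Fin 14) ℤ)))).map
      (MvPolynomial.map (algebraMap _ ParamField)) =
        Ideal.span (Set.range (conicSystem paramMatrix)) := by
    rw [Ideal.map_span, ← Set.range_comp]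
    exact congrArg (Ideal.span ∘ Set.range) (funext (map_conicSystem _ _))
  rw [hspan] at hmap
  simp only [map_scaledBasis] at hmap
  exact hmap

end GenericParameters

/-- Section 3.3 of the paper.  For the ideal `I` generated by the six
entries of `P·F` over `𝔎`, one has `HF_I(1) = 7` and `HF_I(d) = 18` for all `d ≥ 2`; in
particular `dim_𝔎(𝔎[a,b]/I) = 18`. -/
theorem conic_hilbert_function :
    (Nat.choose (6 + 1) 1 -
        Module.finrank ParamField
          ↥(conicIdeal.restrictScalars ParamField ⊓
            restrictTotalDegree (Fin 6) ParamField 1) = 7) ∧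
      (∀ d : ℕ, 2 ≤ d →
        Nat.choose (6 + d) d -
            Module.finrank ParamField
              ↥(conicIdeal.restrictScalars ParamField ⊓
                restrictTotalDegree (Fin 6) ParamField d) = 18) ∧
      Module.finrank ParamField (MvPolynomial (Fin 6) ParamField ⧸ conicIdeal) = 18 := by
  have hind := linearIndependent_scaledBasis_paramMatrix
  rw [conicIdeal_eq_span]
  obtain ⟨hfinite, hfinrank⟩ :=
    finite_and_finrank_quotient_conicSystem det_eliminantMatrix_paramMatrix_ne_zero hind
  have hbasis := linearIndependent_quadraticBasis_of_scaledBasis hind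
  exact ⟨choose_sub_finrank_inf_restrictTotalDegree_one hbasis,
    fun _ hd => choose_sub_finrank_inf_restrictTotalDegree_of_two_le hfinrank hbasis hd, hfinrank⟩
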